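/- If U ∈ GL(n,ℂ) is unipotent (all eigenvalues equal to 1), then for every v ∈ ℂⁿ the affine transformation g = (U,v) ∈ Aff(n,ℂ) is strongly c-reversible, and hence can be written as a product of two coninvolutions in Aff(n,ℂ). -/

import Mathlib

open Matrix
noncomputable section

/-- `Aff n` models the affine group `Aff(n, ℂ) = GL(n, ℂ) ⋉ ℂⁿ`,
with elements `g = (A, v)` acting by `x ↦ A x + v`. -/
@[ext] structure Aff (n : ℕ) where
  A : GL (Fin n) ℂ
  v : Fin n → ℂ

namespace Aff

variable {n : ℕ}

instance : Mul (Aff n) :=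
  ⟨fun g h => ⟨g.A * h.A, (g.A : Matrix (Fin n) (Fin n) ℂ) *ᵥ h.v + g.v⟩⟩

instance : One (Aff n) := ⟨⟨1, 0⟩⟩

instance : Inv (Aff n) :=
  ⟨fun g => ⟨g.A⁻¹, -((g.A⁻¹ : Matrix (Fin n) (Fin n) ℂ) *ᵥ g.v)⟩⟩

@[simp] lemma mul_A (g h : Aff n) : (g * h).A = g.A * h.A := rfl
@[simp] lemma mul_v (g h : Aff n) :
    (g * h).v = (g.A : Matrix (Fin n) (Fin n) ℂ) *ᵥ h.v + g.v := rfl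
@[simp] lemma one_A : (1 : Aff n).A = 1 := rfl
@[simp] lemma one_v : (1 : Aff n).v = 0 := rfl
@[simp] lemma inv_A (g : Aff n) : (g⁻¹).A = g.A⁻¹ := rfl
@[simp] lemma inv_v (g : Aff n) :
    (g⁻¹).v = -((g.A⁻¹ : Matrix (Fin n) (Fin n) ℂ) *ᵥ g.v) := rfl

instance : Group (Aff n) where
  mul_assoc a b c := by
    ext : 1
    · simp [mul_assoc]
    · simp [Units.val_mul, mulVec_add, mulVec_mulVec, add_assoc]
  one_mul a := by
    ext : 1 <;> simp
  mul_one a := by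
    ext : 1 <;> simp
  inv_mul_cancel a := by
    ext : 1 <;> simp

/-- Entrywise complex conjugation on `GL(m, ℂ)`. -/
def glConj {m : Type*} [Fintype m] [DecidableEq m] : GL m ℂ →* GL m ℂ :=
  Units.map ((starRingEnd ℂ).mapMatrix.toMonoidHom)

/-- The conjugate `ḡ = (Ā, v̄)` of an affine transformation `g = (A, v)`. -/
def bar (g : Aff n) : Aff n :=
  ⟨glConj g.A, star g.v⟩

/-- `h ∈ Aff(n, ℂ)` is a coninvolution if `h h̄ = e`. -/
def IsConinvolution (g : Aff n) : Prop := g * bar g = 1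

/-- `g` is c-reversible if `h g h⁻¹ = ḡ⁻¹` for some `h ∈ Aff(n, ℂ)`. -/
def IsCReversible (g : Aff n) : Prop :=
  ∃ h : Aff n, h * g * h⁻¹ = (bar g)⁻¹

/-- `g` is strongly c-reversible if `h g h⁻¹ = ḡ⁻¹` for some coninvolution `h`. -/
def IsStronglyCReversible (g : Aff n) : Prop :=
  ∃ h : Aff n, IsConinvolution h ∧ h * g * h⁻¹ = (bar g)⁻¹

end Aff

/-!
Let `τ` be an antilinear involution of `ℂⁿ × ℂ` that preserves the affine hyperplane `t = 1`. There
`τ` is complex conjugation after an affine map `h`; that `τ` is an involution says that `h` is a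
coninvolution, and that `τ` inverts the linear extension `T` of `g` says `h g h⁻¹ = ḡ⁻¹`. So it
suffices to find a real structure `τ` of `ℂⁿ × ℂ` that inverts the unipotent `T` and is compatible
with the `T`-invariant functional `f (x, t) = t`.

The Cayley transform `S = (T - 1) (T + 1)⁻¹` is nilpotent with `f ∘ S = 0`, and `τ` inverts `T`
exactly when it anticommutes with `S`. Hence `τ` has to be semilinear over `ℂ[X]`, where `X` acts
as `S`, with respect to the involution `p(X) ↦ p̄(-X)`. As `ℂ[X]` is principal, the module is a
direct sum of cyclic modules `ℂ[X] ⧸ (X ^ k)`. Each of these inherits the involution of `ℂ[X]`, and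
multiplying by a phase on each summand makes it compatible with `f`.
-/

section Conjugation

section Semimodule

variable {R K : Type*} [CommSemiring R] [StarRing R]

/-- A conjugation (real structure) of a module `V` over a ring with involution: a conjugate-linear
involution `τ` of `V`. It is moreover asked to intertwine a given functional `f` on `V`, possibly
with values in another ring than `R`, with the involution of its codomain. -/
structure IsConjugation [Star K] {V : Type*} [AddCommMonoid V] [Module R V]
    (τ : V →ₗ⋆[R] V) (f : V → K) : Prop where
  involutive : Function.Involutive τ
  map_eq_star : ∀ x, f (τ x) = star (f x)

theorem exists_isConjugation_of_linearEquiv [Star K] {V V' : Type*}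
    [AddCommMonoid V] [Module R V] [AddCommMonoid V'] [Module R V'] (e : V ≃ₗ[R] V') {f : V → K}
    (h : ∃ τ : V' →ₗ⋆[R] V', IsConjugation τ (f ∘ e.symm)) :
    ∃ τ : V →ₗ⋆[R] V, IsConjugation τ f := by
  obtain ⟨τ, hτ⟩ := h
  refine ⟨e.symm.toLinearMap.comp (τ.comp e.toLinearMap), fun x => ?_, fun x => ?_⟩
  · simp [hτ.involutive (e x)]
  · simpa using hτ.map_eq_star (e x)

theorem exists_isConjugation_pi [AddCommMonoid K] [StarAddMonoid K] {ι : Type*} [Finite ι]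
    [DecidableEq ι] {V : ι → Type*} [∀ i, AddCommMonoid (V i)] [∀ i, Module R (V i)]
    (f : (∀ i, V i) →+ K)
    (h : ∀ i, ∃ τ : V i →ₗ⋆[R] V i, IsConjugation τ (f ∘ Pi.single i)) :
    ∃ τ : (∀ i, V i) →ₗ⋆[R] (∀ i, V i), IsConjugation τ f := by
  cases nonempty_fintype ι
  choose τ hτ using h
  have f_eq_sum (x : ∀ i, V i) : f x = ∑ i, f (Pi.single i (x i)) := by
    rw [← map_sum, Finset.univ_sum_single]
  refine ⟨{ toFun := fun x i => τ i (x i)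
            map_add' := fun x y => by ext; simp
            map_smul' := fun r x => by ext; simp }, fun x => ?_, fun x => ?_⟩
  · ext i
    exact (hτ i).involutive (x i)
  · rw [f_eq_sum, f_eq_sum x, star_sum]
    exact Finset.sum_congr rfl fun i _ => (hτ i).map_eq_star (x i)

end Semimodule

lemma exists_mul_star_eq_one_and_mul_eq_star {K : Type*} [Field K] [StarRing K] (c : K) :
    ∃ u : K, u * star u = 1 ∧ u * c = star c := by
  obtain rfl | hc := eq_or_ne c 0
  · exact ⟨1, by simp, by simp⟩
  · have hc' : star c ≠ 0 := star_ne_zero.mpr hc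
    exact ⟨star c / c, by rw [star_div₀, star_star]; field_simp, div_mul_cancel₀ _ hc⟩

variable {R K : Type*} [CommRing R] [StarRing R] [Field K] [StarRing K] [Algebra K R]
  [StarModule K R]

theorem exists_isConjugation_quotient (ε : R →⋆ₐ[K] K) {I : Ideal R}
    (hI : I ≤ I.comap (starRingEnd R)) (f : (R ⧸ I) →ₛₗ[(ε : R →+* K)] K) :
    ∃ τ : (R ⧸ I) →ₗ⋆[R] (R ⧸ I), IsConjugation τ f := by
  obtain ⟨u, hu, huf⟩ := exists_mul_star_eq_one_and_mul_eq_star (f 1)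
  have f_mk (r : R) : f (Ideal.Quotient.mk I r) = ε r * f 1 := by
    have := f.map_smulₛₗ r 1
    rwa [Algebra.smul_def, mul_one] at this
  -- `star` fixes the generator `1`, so the phase `u` has to turn `f 1` into `star (f 1)`.
  let a : R := algebraMap K R u
  have ha : a * star a = 1 := by
    rw [← algebraMap_star_comm, ← map_mul, hu, map_one]
  let τ : (R ⧸ I) →ₗ⋆[R] (R ⧸ I) :=
    { toFun := fun y => a • Ideal.quotientMap I (starRingEnd R) hI y
      map_add' := by simp
      map_smul' := fun r y => by simp [Algebra.smul_def, mul_left_comm] }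
  have τ_mk (r : R) : τ (Ideal.Quotient.mk I r) = Ideal.Quotient.mk I (a * star r) := rfl
  refine ⟨τ, fun y => ?_, fun y => ?_⟩ <;> obtain ⟨r, rfl⟩ := Ideal.Quotient.mk_surjective y
  · rw [τ_mk, τ_mk, star_mul', star_star, ← mul_assoc, ha, one_mul]
  · have ε_a : ε a = u := AlgHomClass.commutes ε u
    rw [τ_mk, f_mk, f_mk, map_mul, map_star, ε_a, star_mul', ← huf]
    ring

theorem exists_isConjugation_of_isTorsion' [IsDomain R] [IsPrincipalIdealRing R]
    {V : Type*} [AddCommGroup V] [Module R V] [Module.Finite R V] {p : R} (hp : Irreducible p)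
    (hp_star : p ∣ star p) (hV : Module.IsTorsion' V (Submonoid.powers p))
    (ε : R →⋆ₐ[K] K) (f : V →ₛₗ[(ε : R →+* K)] K) :
    ∃ τ : V →ₗ⋆[R] V, IsConjugation τ f := by
  classical
  obtain ⟨d, k, ⟨e⟩⟩ := Module.torsion_by_prime_power_decomposition hp hV
  have span_le (i : Fin d) :
      Ideal.span {p ^ k i} ≤ (Ideal.span {p ^ k i}).comap (starRingEnd R) := by
    rw [Ideal.span_singleton_le_iff_mem, Ideal.mem_comap, map_pow]
    exact Ideal.mem_span_singleton.mpr (pow_dvd_pow_of_dvd hp_star _)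
  let e' := e.trans (DirectSum.linearEquivFunOnFintype R (Fin d) _)
  let f' : (∀ i, R ⧸ Ideal.span {p ^ k i}) →ₛₗ[(ε : R →+* K)] K := f.comp e'.symm.toLinearMap
  exact exists_isConjugation_of_linearEquiv e' <|
    exists_isConjugation_pi f'.toAddMonoidHom fun i =>
      exists_isConjugation_quotient ε (span_le i)
        (f'.comp (LinearMap.single R (fun i => R ⧸ Ideal.span {p ^ k i}) i))

end Conjugation

section LinearOperator

open Polynomial

theorem isNilpotent_sub_algebraMap_of_spectrum_eq {K m : Type*} [Field K] [IsAlgClosed K]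
    [Fintype m] [DecidableEq m] {A : Matrix m m K} {c : K} (hA : ∀ μ ∈ spectrum K A, μ = c) :
    IsNilpotent (A - algebraMap K _ c) := by
  have charpoly_eq := (IsAlgClosed.splits A.charpoly).eq_prod_roots_of_monic A.charpoly_monic
  have roots_eq : A.charpoly.roots = Multiset.replicate (Multiset.card A.charpoly.roots) c :=
    Multiset.eq_replicate_card.mpr fun μ hμ =>
      hA μ (Matrix.mem_spectrum_iff_isRoot_charpoly.mpr (isRoot_of_mem_roots hμ))
  have aeval_eq := A.aeval_self_charpoly
  rw [charpoly_eq, roots_eq, Multiset.map_replicate, Multiset.prod_replicate, map_pow,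
    map_sub, aeval_X, aeval_C] at aeval_eq
  exact ⟨_, aeval_eq⟩

lemma apply_aeval_of_comp_eq_zero {R M N : Type*} [CommSemiring R] [AddCommMonoid M] [Module R M]
    [AddCommMonoid N] [Module R N] {S : Module.End R M} {f : M →ₗ[R] N} (hf : f ∘ₗ S = 0)
    (p : R[X]) (x : M) : f (aeval S p x) = p.eval 0 • f x := by
  have f_S (y : M) : f (S y) = 0 := congr($hf y)
  induction p using Polynomial.induction_on' with
  | add p q hp hq => simp [hp, hq, add_smul]
  | monomial j a => cases j <;> simp [aeval_monomial, pow_succ', f_S]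

variable {K W : Type*} [Field K] [StarRing K] [AddCommGroup W] [Module K W]

/-- The involution `p(X) ↦ p̄(-X)` of `K[X]`. For the `K[X]`-module structure given by an
endomorphism `S`, the conjugations over `K[X]` are the conjugations over `K` that anticommute
with `S`. -/
abbrev alternatingStarRing (K : Type*) [Field K] [StarRing K] : StarRing K[X] where
  star := eval₂RingHom (C.comp (starRingEnd K)) (-X)
  star_involutive p := by
    have : (eval₂RingHom (C.comp (starRingEnd K)) (-X)).comp
        (eval₂RingHom (C.comp (starRingEnd K)) (-X)) = RingHom.id K[X] := by
      ext <;> simp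
    exact congr($this p)
  star_mul p q := by rw [map_mul, mul_comm]
  star_add := map_add _

attribute [local instance] alternatingStarRing

lemma star_X : star (X : K[X]) = -X := eval₂_X _ _

lemma star_C (c : K) : star (C c) = C (star c) := eval₂_C _ _

instance : StarModule K K[X] where
  star_smul c p := by rw [smul_eq_C_mul, smul_eq_C_mul, star_mul', star_C]

/-- Evaluation at `0`, the augmentation of `K[X]` compatible with its involution. -/
def evalZeroStarAlgHom (K : Type*) [Field K] [StarRing K] : K[X] →⋆ₐ[K] K where
  __ := aeval (0 : K)
  map_star' p := by
    induction p using Polynomial.induction_on' with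
    | add p q hp hq => simp_all
    | monomial j a => cases j <;> simp [← C_mul_X_pow_eq_monomial, star_X, star_C]

theorem exists_isConjugation_anticommuting [FiniteDimensional K W] {S : Module.End K W}
    (hS : IsNilpotent S) {f : W →ₗ[K] K} (hf : f ∘ₗ S = 0) :
    ∃ τ : W →ₗ⋆[K] W, IsConjugation τ f ∧ ∀ w, τ (S w) = -S (τ w) := by
  let o : W ≃ₗ[K] Module.AEval' S := Module.AEval'.of S
  have torsion : Module.IsTorsion' (Module.AEval' S) (Submonoid.powers (X : K[X])) := by
    obtain ⟨m, hm⟩ := hS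
    intro x
    obtain ⟨w, rfl⟩ := o.surjective x
    exact ⟨⟨X ^ m, m, rfl⟩, by simp [Submonoid.smul_def, o, Module.AEval'.X_pow_smul_of, hm]⟩
  let F : Module.AEval' S →ₛₗ[(evalZeroStarAlgHom K : K[X] →+* K)] K :=
    { toFun := fun x => f (o.symm x)
      map_add' := by simp
      map_smul' := fun p x => by
        rw [Module.AEval.of_symm_smul]
        exact apply_aeval_of_comp_eq_zero hf p _ }
  obtain ⟨τ, hτ⟩ :=
    exists_isConjugation_of_isTorsion' irreducible_X (by simp [star_X]) torsion _ F
  refine ⟨{ toFun := fun w => o.symm (τ (o w))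
            map_add' := by simp
            map_smul' := fun c w => ?_ }, ⟨fun w => ?_, fun w => ?_⟩, fun w => ?_⟩
  · rw [map_smul, ← Module.AEval.C_smul, map_smulₛₗ, starRingEnd_apply, star_C,
      Module.AEval.C_smul, map_smul, starRingEnd_apply]
  · simp [hτ.involutive (o w)]
  · simpa [F] using hτ.map_eq_star (o w)
  · change o.symm (τ (o (S w))) = -S (o.symm (τ (o w)))
    rw [← Module.AEval'.X_smul_of, map_smulₛₗ, starRingEnd_apply, star_X, neg_smul, map_neg,
      Module.AEval'.of_symm_X_smul]

lemma exists_cayley_of_isNilpotent_sub_one {A : Type*} [Ring A] (h2 : IsUnit (2 : A)) {t : A}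
    (ht : IsNilpotent (t - 1)) :
    ∃ k, IsNilpotent k ∧ t - 1 ∣ k ∧ t * (1 - k) = 1 + k := by
  have t_add_one : t - 1 + 2 = t + 1 := by rw [← one_add_one_eq_two]; abel
  obtain ⟨u, hu⟩ : IsUnit (t + 1) :=
    t_add_one ▸ ht.isUnit_add_right_of_commute h2 (Commute.ofNat_right _ _)
  have comm_u : Commute (t - 1) u := by
    rw [hu, ← t_add_one]
    exact (Commute.refl _).add_right (Commute.ofNat_right _ _)
  refine ⟨(t - 1) * ↑u⁻¹, comm_u.units_inv_right.isNilpotent_mul_right ht, dvd_mul_right _ _, ?_⟩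
  have h : (t + 1) * ((t - 1) * ↑u⁻¹) = t - 1 := by
    rw [← hu, ← mul_assoc, ← comm_u.eq, mul_assoc, Units.mul_inv, mul_one]
  calc t * (1 - (t - 1) * ↑u⁻¹) = t - ((t + 1) * ((t - 1) * ↑u⁻¹) - (t - 1) * ↑u⁻¹) := by
        noncomm_ring
    _ = 1 + (t - 1) * ↑u⁻¹ := by rw [h]; abel

theorem exists_isConjugation_inverting [FiniteDimensional K W] [NeZero (2 : K)]
    {T : Module.End K W} (hT : IsNilpotent (T - 1)) {f : W →ₗ[K] K} (hf : f ∘ₗ T = f) :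
    ∃ τ : W →ₗ⋆[K] W, IsConjugation τ f ∧ ∀ w, T (τ (T w)) = τ w := by
  have h2 : IsUnit (2 : Module.End K W) := by
    rw [← map_ofNat (algebraMap K (Module.End K W)) 2]
    exact (IsUnit.mk0 2 two_ne_zero).map _
  obtain ⟨S, hS, ⟨S', hS'⟩, hTS⟩ := exists_cayley_of_isNilpotent_sub_one h2 hT
  have f_S : f ∘ₗ S = 0 := by
    ext w
    have f_T (x : W) : f (T x) = f x := congr($hf x)
    simp [hS', f_T]
  obtain ⟨τ, hτ, τ_S⟩ := exists_isConjugation_anticommuting hS f_S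
  have T_sub (x : W) : T (x - S x) = x + S x := congr($hTS x)
  refine ⟨τ, hτ, fun w => ?_⟩
  obtain ⟨x, rfl⟩ : ∃ x, (1 - S) x = w :=
    ((Module.End.isUnit_iff _).mp hS.isUnit_one_sub).surjective w
  calc T (τ (T (x - S x))) = T (τ x - S (τ x)) := by
        rw [T_sub, map_add, τ_S, sub_eq_add_neg]
    _ = τ x + S (τ x) := T_sub _
    _ = τ (x - S x) := by rw [map_sub, τ_S, sub_neg_eq_add]

end LinearOperator

namespace Aff

variable {n : ℕ}

/-- `g = (A, v)` acts on `ℂⁿ` by `x ↦ A x + v`. -/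
instance : MulAction (Aff n) (Fin n → ℂ) where
  smul g x := (g.A : Matrix (Fin n) (Fin n) ℂ) *ᵥ x + g.v
  one_smul x := by
    change ((1 : Matrix (Fin n) (Fin n) ℂ) *ᵥ x) + 0 = x
    simp
  mul_smul g h x := by
    change (_ *ᵥ _ + _ : Fin n → ℂ) = _ *ᵥ (_ *ᵥ _ + _) + _
    simp [mulVec_add, mulVec_mulVec, add_assoc]

lemma smul_eq (g : Aff n) (x : Fin n → ℂ) :
    g • x = (g.A : Matrix (Fin n) (Fin n) ℂ) *ᵥ x + g.v := rfl

instance : FaithfulSMul (Aff n) (Fin n → ℂ) where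
  eq_of_smul_eq_smul {g h} H := by
    have v_eq : g.v = h.v := by simpa [smul_eq] using H 0
    refine Aff.ext (Units.ext <| Matrix.mulVec_injective <| funext fun x => ?_) v_eq
    simpa [smul_eq, v_eq] using H x

lemma bar_smul (g : Aff n) (x : Fin n → ℂ) : bar g • x = star (g • star x) := by
  have : (glConj g.A : Matrix (Fin n) (Fin n) ℂ) *ᵥ x =
      star ((g.A : Matrix (Fin n) (Fin n) ℂ) *ᵥ star x) := by
    ext i
    simp [glConj, Matrix.mulVec, dotProduct]
  rw [smul_eq, smul_eq, star_add, ← this]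
  rfl

lemma bar_mul (g h : Aff n) : bar (g * h) = bar g * bar h :=
  eq_of_smul_eq_smul fun x : Fin n → ℂ => by simp [bar_smul, mul_smul]

lemma bar_inv (g : Aff n) : bar g⁻¹ = (bar g)⁻¹ :=
  map_inv (MonoidHom.mk' bar bar_mul) g

theorem IsStronglyCReversible.exists_eq_mul {g : Aff n} (hg : IsStronglyCReversible g) :
    ∃ a b : Aff n, IsConinvolution a ∧ IsConinvolution b ∧ g = a * b := by
  obtain ⟨h, hh, hgh⟩ := hg
  have bar_h : bar h = h⁻¹ := eq_inv_of_mul_eq_one_right hh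
  refine ⟨h⁻¹, h * g, ?_, ?_, (inv_mul_cancel_left h g).symm⟩
  · rw [IsConinvolution, bar_inv, bar_h, inv_inv, inv_mul_cancel]
  · rw [IsConinvolution, bar_mul, bar_h, ← mul_assoc, hgh, inv_mul_cancel]

/-- The linear extension `(x, t) ↦ (A x + t v, t)` of `g = (A, v)` to `ℂⁿ × ℂ`, which restricts
to the action of `g` on the affine hyperplane `t = 1`. -/
def homogenize (g : Aff n) : Module.End ℂ ((Fin n → ℂ) × ℂ) :=
  ((g.A : Matrix (Fin n) (Fin n) ℂ).mulVecLin.coprod (LinearMap.toSpanSingleton ℂ _ g.v)).prod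
    (LinearMap.snd ℂ _ _)

lemma homogenize_apply (g : Aff n) (x : Fin n → ℂ) (t : ℂ) :
    homogenize g (x, t) = ((g.A : Matrix (Fin n) (Fin n) ℂ) *ᵥ x + t • g.v, t) := rfl

lemma homogenize_one_right (g : Aff n) (x : Fin n → ℂ) : homogenize g (x, 1) = (g • x, 1) := by
  rw [homogenize_apply, one_smul, smul_eq]

lemma isNilpotent_homogenize_sub_one {g : Aff n}
    (hg : IsNilpotent ((g.A : Matrix (Fin n) (Fin n) ℂ) - 1)) :
    IsNilpotent (homogenize g - 1) := by
  obtain ⟨m, hm⟩ := hg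
  let inl := LinearMap.inl ℂ (Fin n → ℂ) ℂ
  let N := ((g.A : Matrix (Fin n) (Fin n) ℂ) - 1).toLin'
  have comp_inl : (homogenize g - 1) ∘ₗ inl = inl ∘ₗ N := by
    ext <;> simp [inl, N, homogenize]
  have pow_comp_inl : ((homogenize g - 1) ^ m) ∘ₗ inl = 0 := by
    rw [Module.End.commute_pow_left_of_commute comp_inl, ← Matrix.toLin'_pow, hm, map_zero,
      LinearMap.comp_zero]
  refine ⟨m + 1, LinearMap.ext fun ⟨x, t⟩ => ?_⟩
  have mem_range : (homogenize g - 1) (x, t) = inl (((homogenize g - 1) (x, t)).1) := by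
    simp [inl, homogenize_apply]
  rw [pow_succ, Module.End.mul_apply, mem_range, ← LinearMap.comp_apply, pow_comp_inl]
  rfl

theorem exists_smul_of_snd_eq {L : ((Fin n → ℂ) × ℂ) →ₗ[ℂ] ((Fin n → ℂ) × ℂ)}
    (L_inj : Function.Injective L) (L_snd : ∀ w, (L w).2 = w.2) :
    ∃ h : Aff n, ∀ x, L (x, 1) = (h • x, 1) := by
  let ℓ : (Fin n → ℂ) →ₗ[ℂ] (Fin n → ℂ) :=
    LinearMap.fst ℂ _ _ ∘ₗ L ∘ₗ LinearMap.inl ℂ _ _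
  have L_zero_right (x : Fin n → ℂ) : L (x, 0) = (ℓ x, 0) := Prod.ext rfl (L_snd _)
  have ℓ_inj : Function.Injective ℓ := fun x y hxy =>
    Prod.mk_left_inj.mp <| L_inj <| by rw [L_zero_right x, L_zero_right y, hxy]
  obtain ⟨B, hB⟩ : IsUnit ℓ.toMatrix' :=
    Matrix.mulVec_injective_iff_isUnit.mp (by simpa [funext ℓ.toMatrix'_mulVec] using ℓ_inj)
  refine ⟨⟨B, (L (0, 1)).1⟩, fun x => ?_⟩
  calc L (x, 1) = L (x, 0) + L (0, 1) := by rw [← map_add]; simp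
    _ = (ℓ x + (L (0, 1)).1, 1) := by
        rw [L_zero_right]
        ext1 <;> simp [L_snd]
    _ = ((⟨B, (L (0, 1)).1⟩ : Aff n) • x, 1) := by
        rw [smul_eq, hB, LinearMap.toMatrix'_mulVec]

theorem isStronglyCReversible_of_isConjugation {g : Aff n}
    {τ : ((Fin n → ℂ) × ℂ) →ₗ⋆[ℂ] ((Fin n → ℂ) × ℂ)} (hτ : IsConjugation τ Prod.snd)
    (hg : ∀ w, homogenize g (τ (homogenize g w)) = τ w) : IsStronglyCReversible g := by
  obtain ⟨h, hh⟩ := exists_smul_of_snd_eq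
    (L := (starLinearEquiv ℂ (A := (Fin n → ℂ) × ℂ)).toLinearMap.comp τ)
    (star_injective.comp hτ.involutive.injective) (fun w => by simp [hτ.map_eq_star])
  have τ_apply (x : Fin n → ℂ) : τ (x, 1) = (star (h • x), 1) := by
    simpa [Prod.star_def] using congr(star $(hh x))
  refine ⟨h, eq_of_smul_eq_smul fun x : Fin n → ℂ => ?_, ?_⟩
  · have := hτ.involutive (star x, 1)
    rw [τ_apply, τ_apply, Prod.mk_left_inj] at this
    rw [mul_smul, bar_smul, one_smul, star_injective this]
  · rw [mul_inv_eq_iff_eq_mul, eq_inv_mul_iff_mul_eq]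
    refine eq_of_smul_eq_smul fun x : Fin n → ℂ => ?_
    have := hg (x, 1)
    rw [homogenize_one_right, τ_apply, homogenize_one_right, τ_apply, Prod.mk_left_inj] at this
    rw [mul_smul, mul_smul, bar_smul, this, star_star]

end Aff

/-- if `U ∈ GL(n, ℂ)` is unipotent (all eigenvalues equal to `1`),
then for every `v ∈ ℂⁿ` the affine transformation `g = (U, v)` is strongly
c-reversible, hence a product of two coninvolutions in `Aff(n, ℂ)`. -/
theorem unipotent_stronglyCReversible {n : ℕ} (U : GL (Fin n) ℂ)
    (hU : ∀ μ ∈ spectrum ℂ (U : Matrix (Fin n) (Fin n) ℂ), μ = 1)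
    (v : Fin n → ℂ) :
    Aff.IsStronglyCReversible ⟨U, v⟩ ∧
      ∃ a b : Aff n, Aff.IsConinvolution a ∧ Aff.IsConinvolution b ∧
        (⟨U, v⟩ : Aff n) = a * b := by
  have hg : Aff.IsStronglyCReversible ⟨U, v⟩ := by
    have unipotent : IsNilpotent ((U : Matrix (Fin n) (Fin n) ℂ) - 1) := by
      simpa using isNilpotent_sub_algebraMap_of_spectrum_eq hU
    obtain ⟨τ, hτ, hτU⟩ := exists_isConjugation_inverting
      (Aff.isNilpotent_homogenize_sub_one (g := ⟨U, v⟩) unipotent)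
      (f := LinearMap.snd ℂ _ _) rfl
    exact Aff.isStronglyCReversible_of_isConjugation hτ hτU
  exact ⟨hg, hg.exists_eq_mul⟩
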